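/- Let A : ℝ → Matrix n n ℂ be continuous. Set R₁ = A, R₂ = −(1/2) A ▷ A, R₃ = (1/4) (A ▷ A) ▷ A + (1/12) A ▷ (A ▷ A), and let R₄ : ℝ → Matrix n n ℂ be the (unique) map satisfying R₄ + (1/2)(R₁ ▷ R₃ + R₂ ▷ R₂ + R₃ ▷ R₁) + (1/6)(R₁ ▷ (R₁ ▷ R₂) + R₁ ▷ (R₂ ▷ R₁) + R₂ ▷ (R₁ ▷ R₁)) + (1/24) R₁ ▷ (R₁ ▷ (R₁ ▷ R₁)) = 0. Then R₄ = −(1/6) ((A ▷ A) ▷ A) ▷ A − (1/12) A ▷ ((A ▷ A) ▷ A). -/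

import Mathlib

attribute [local instance] Matrix.normedAddCommGroup Matrix.normedSpace

/-- The binary operation `(P ▷ Q)(t) = ∫₀ᵗ [P(u), Q(t)] du` on maps
`ℝ → Matrix n n ℂ`, where `[X,Y] = XY − YX`. -/
noncomputable def rhd {n : ℕ} (P Q : ℝ → Matrix (Fin n) (Fin n) ℂ) :
    ℝ → Matrix (Fin n) (Fin n) ℂ :=
  fun t => ∫ u in (0:ℝ)..t, (P u * Q t - Q t * P u)

/-- The primitive `∫₀ᵗ P`. -/
noncomputable def prim {n : ℕ} (P : ℝ → Matrix (Fin n) (Fin n) ℂ) :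
    ℝ → Matrix (Fin n) (Fin n) ℂ :=
  fun t => ∫ u in (0:ℝ)..t, P u

/-- The commutator as a continuous bilinear map. -/
noncomputable def brk (n : ℕ) : Matrix (Fin n) (Fin n) ℂ →L[ℝ] Matrix (Fin n) (Fin n) ℂ →L[ℝ]
    Matrix (Fin n) (Fin n) ℂ :=
  LinearMap.toContinuousLinearMap
    ((LinearMap.toContinuousLinearMap (𝕜 := ℝ) (E := Matrix (Fin n) (Fin n) ℂ)
      (F' := Matrix (Fin n) (Fin n) ℂ)).toLinearMap ∘ₗ
      (LinearMap.mul ℝ (Matrix (Fin n) (Fin n) ℂ) -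
        (LinearMap.mul ℝ (Matrix (Fin n) (Fin n) ℂ)).flip))

lemma brk_apply {n : ℕ} (X Y : Matrix (Fin n) (Fin n) ℂ) : brk n X Y = X * Y - Y * X := by
  simp [brk]

lemma prim_hasDerivAt {n : ℕ} {P : ℝ → Matrix (Fin n) (Fin n) ℂ} (hP : Continuous P) (t : ℝ) :
    HasDerivAt (prim P) (P t) t :=
  (hP.integral_hasStrictDerivAt 0 t).hasDerivAt

lemma prim_continuous {n : ℕ} {P : ℝ → Matrix (Fin n) (Fin n) ℂ} (hP : Continuous P) :
    Continuous (prim P) :=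
  continuous_iff_continuousAt.2 fun t => (prim_hasDerivAt hP t).continuousAt

lemma rhd_apply {n : ℕ} {P : ℝ → Matrix (Fin n) (Fin n) ℂ} (hP : Continuous P)
    (Q : ℝ → Matrix (Fin n) (Fin n) ℂ) (t : ℝ) :
    rhd P Q t = prim P t * Q t - Q t * prim P t := by
  have h := ((brk n).flip (Q t)).intervalIntegral_comp_comm (hP.intervalIntegrable
    (μ := MeasureTheory.volume) 0 t)
  have e : ∀ X, (brk n).flip (Q t) X = X * Q t - Q t * X := fun X => brk_apply X _
  exact (intervalIntegral.integral_congr (fun u _ => (e (P u)).symm)).trans (h.trans (e _))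

lemma rhd_continuous {n : ℕ} {P Q : ℝ → Matrix (Fin n) (Fin n) ℂ} (hP : Continuous P)
    (hQ : Continuous Q) : Continuous (rhd P Q) := by
  have : rhd P Q = fun t => brk n (prim P t) (Q t) := by
    funext t; rw [rhd_apply hP, brk_apply]
  rw [this]
  exact ((brk n).continuous.comp (prim_continuous hP)).clm_apply hQ

lemma prim_add {n : ℕ} {P Q : ℝ → Matrix (Fin n) (Fin n) ℂ} (hP : Continuous P)
    (hQ : Continuous Q) : prim (P + Q) = prim P + prim Q := by
  funext t
  exact intervalIntegral.integral_add (hP.intervalIntegrable _ _) (hQ.intervalIntegrable _ _)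

lemma prim_smul {n : ℕ} (c : ℂ) (P : ℝ → Matrix (Fin n) (Fin n) ℂ) :
    prim (c • P) = c • prim P := by
  funext t
  exact intervalIntegral.integral_smul c P

lemma prim_rhd_sub {n : ℕ} {F G : ℝ → Matrix (Fin n) (Fin n) ℂ} (hF : Continuous F)
    (hG : Continuous G) (t : ℝ) :
    prim (rhd F G) t = prim (rhd G F) t + (prim F t * prim G t - prim G t * prim F t) := by
  have hd : ∀ x, HasDerivAt (fun t => brk n (prim F t) (prim G t)) (rhd F G x - rhd G F x) x := by
    intro x
    have h := (brk n).hasDerivAt_of_bilinear (fun _ => prim_hasDerivAt hF x)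
      (fun _ => prim_hasDerivAt hG x)
    have e : rhd F G x - rhd G F x = brk n (prim F x) (G x) + brk n (F x) (prim G x) := by
      rw [rhd_apply hF, rhd_apply hG, brk_apply, brk_apply]
      abel
    rw [e]
    exact h
  have c1 := rhd_continuous hF hG
  have c2 := rhd_continuous hG hF
  have h := intervalIntegral.integral_eq_sub_of_hasDerivAt (a := 0) (b := t)
    (fun x _ => hd x) ((c1.sub c2).intervalIntegrable _ _)
  rw [intervalIntegral.integral_sub (c1.intervalIntegrable _ _) (c2.intervalIntegrable _ _)] at h
  have h0 : prim F 0 = 0 := intervalIntegral.integral_same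
  rw [h0, brk_apply, brk_apply, zero_mul, mul_zero, sub_zero, sub_zero] at h
  rw [← h]
  simp only [prim]
  abel

lemma rhd_pre_lie {n : ℕ} {F G H : ℝ → Matrix (Fin n) (Fin n) ℂ} (hF : Continuous F)
    (hG : Continuous G) :
    rhd G (rhd F H) = rhd F (rhd G H) - rhd (rhd F G) H + rhd (rhd G F) H := by
  funext t
  simp only [Pi.add_apply, Pi.sub_apply]
  rw [rhd_apply (rhd_continuous hF hG), rhd_apply (rhd_continuous hG hF), rhd_apply hF,
    rhd_apply hG, rhd_apply hF, rhd_apply hG, prim_rhd_sub hF hG]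
  noncomm_ring

lemma rhd_add_left {n : ℕ} {P Q : ℝ → Matrix (Fin n) (Fin n) ℂ} (hP : Continuous P)
    (hQ : Continuous Q) (S : ℝ → Matrix (Fin n) (Fin n) ℂ) :
    rhd (P + Q) S = rhd P S + rhd Q S := by
  funext t
  have hPQ : Continuous (P + Q) := hP.add hQ
  rw [Pi.add_apply, rhd_apply hPQ, rhd_apply hP, rhd_apply hQ, prim_add hP hQ, Pi.add_apply]
  noncomm_ring

lemma rhd_smul_left {n : ℕ} (c : ℂ) {P : ℝ → Matrix (Fin n) (Fin n) ℂ} (hP : Continuous P)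
    (S : ℝ → Matrix (Fin n) (Fin n) ℂ) : rhd (c • P) S = c • rhd P S := by
  funext t
  have hc : Continuous (c • P) := hP.const_smul c
  rw [Pi.smul_apply, rhd_apply hc, rhd_apply hP, prim_smul, Pi.smul_apply, smul_mul_assoc,
    mul_smul_comm, smul_sub]

lemma rhd_add_right {n : ℕ} {P : ℝ → Matrix (Fin n) (Fin n) ℂ} (hP : Continuous P)
    (Q S : ℝ → Matrix (Fin n) (Fin n) ℂ) :
    rhd P (Q + S) = rhd P Q + rhd P S := by
  funext t
  rw [Pi.add_apply, rhd_apply hP, rhd_apply hP, rhd_apply hP, Pi.add_apply]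
  noncomm_ring

lemma rhd_smul_right {n : ℕ} (c : ℂ) {P : ℝ → Matrix (Fin n) (Fin n) ℂ} (hP : Continuous P)
    (S : ℝ → Matrix (Fin n) (Fin n) ℂ) : rhd P (c • S) = c • rhd P S := by
  funext t
  rw [Pi.smul_apply, rhd_apply hP, rhd_apply hP, Pi.smul_apply, smul_mul_assoc,
    mul_smul_comm, smul_sub]

/-- The fourth Magnus term: if `R₁ = A`, `R₂ = −(1/2) A ▷ A`,
`R₃ = (1/4)(A ▷ A) ▷ A + (1/12) A ▷ (A ▷ A)`, and `R₄` satisfies the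
order-ε⁴ Magnus relation, then
`R₄ = −(1/6)((A ▷ A) ▷ A) ▷ A − (1/12) A ▷ ((A ▷ A) ▷ A)`. -/
theorem magnus_R4 {n : ℕ} (A : ℝ → Matrix (Fin n) (Fin n) ℂ)
    (hA : Continuous A)
    (R₁ R₂ R₃ R₄ : ℝ → Matrix (Fin n) (Fin n) ℂ)
    (h1 : R₁ = A)
    (h2 : R₂ = -((1/2 : ℂ) • rhd A A))
    (h3 : R₃ = (1/4 : ℂ) • rhd (rhd A A) A + (1/12 : ℂ) • rhd A (rhd A A))
    (h4 : R₄
        + (1/2 : ℂ) • (rhd R₁ R₃ + rhd R₂ R₂ + rhd R₃ R₁)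
        + (1/6 : ℂ) • (rhd R₁ (rhd R₁ R₂) + rhd R₁ (rhd R₂ R₁) + rhd R₂ (rhd R₁ R₁))
        + (1/24 : ℂ) • rhd R₁ (rhd R₁ (rhd R₁ R₁)) = 0) :
    R₄ = -((1/6 : ℂ) • rhd (rhd (rhd A A) A) A)
        - (1/12 : ℂ) • rhd A (rhd (rhd A A) A) := by
  have cB := rhd_continuous hA hA
  have cBA := rhd_continuous cB hA
  have cAB := rhd_continuous hA cB
  have c1 : Continuous ((1/4 : ℂ) • rhd (rhd A A) A) := cBA.const_smul _
  have c2 : Continuous ((1/12 : ℂ) • rhd A (rhd A A)) := cAB.const_smul _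
  rw [← neg_smul] at h2
  subst h1 h2 h3
  rw [rhd_add_left c1 c2, rhd_smul_left _ cBA, rhd_smul_left _ cAB, rhd_add_right hA,
    rhd_smul_right _ hA, rhd_smul_right _ hA, rhd_smul_left _ cB, rhd_smul_left _ cB,
    rhd_smul_left _ cB, rhd_smul_right _ cB, rhd_smul_right _ hA, rhd_smul_right _ hA,
    rhd_smul_right _ hA, rhd_pre_lie (H := R₁) hA cB] at h4
  generalize rhd (rhd (rhd R₁ R₁) R₁) R₁ = a at *
  generalize rhd R₁ (rhd (rhd R₁ R₁) R₁) = b at *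
  generalize rhd R₁ (rhd R₁ (rhd R₁ R₁)) = c at *
  generalize rhd (rhd R₁ (rhd R₁ R₁)) R₁ = d at *
  linear_combination (norm := module) h4
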